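/- Let Q be a prime power, s ≥ 2 an integer, q = Q^{s}, let b be a positive divisor of (Q^{s}−1)/(Q−1) with b < (Q^{s}−1)/(Q−1), and let c be a positive divisor of s with c < s. Set M = (Q^{s}−1)/(b(Q−1)) and N = Q^{s−c}, and assume M > N. Then for every integer b' with 0 ≤ b' ≤ ⌊(M−1)/N⌋ − 1, setting r = ⌊(M−1)/N⌋ + 1 − b' and δ = M + 1 − r, and for all integers t, m with 1 ≤ t < m ≤ gcd(b, (Q^{c}−1)/(Q−1)) · (q−1)q/(bQ^{c}M), there exists an optimal (r, δ)-LRC over F_q with parameters [mM, tr+1, (m−t)M]_q. -/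

import Mathlib

/-- The Hamming weight of a vector: the number of nonzero coordinates. -/
def hammingWt {F : Type*} [Zero F] [DecidableEq F] {n : ℕ} (v : Fin n → F) : ℕ :=
  (Finset.univ.filter (fun i => v i ≠ 0)).card

/-- The minimum distance of the linear code `C` is at least `d`. -/
def MinDistGe {F : Type*} [Field F] [DecidableEq F] {n : ℕ}
    (C : Submodule F (Fin n → F)) (d : ℕ) : Prop :=
  ∀ c ∈ C, c ≠ 0 → d ≤ hammingWt c

/-- The minimum distance of the linear code `C` is exactly `d`. -/
def MinDistEq {F : Type*} [Field F] [DecidableEq F] {n : ℕ}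
    (C : Submodule F (Fin n → F)) (d : ℕ) : Prop :=
  MinDistGe C d ∧ ∃ c ∈ C, c ≠ 0 ∧ hammingWt c = d

/-- `C` is an `(r, δ)`-locally repairable code: every coordinate `i` has a repair
group `R` containing `i`, of size at most `r + δ - 1`, such that the punctured code
`C|_R` has minimum distance at least `δ` (i.e. every codeword whose restriction to
`R` is nonzero has at least `δ` nonzero coordinates inside `R`). -/
def IsLRC {F : Type*} [Field F] [DecidableEq F] {n : ℕ}
    (C : Submodule F (Fin n → F)) (r δ : ℕ) : Prop :=
  ∀ i : Fin n, ∃ R : Finset (Fin n), i ∈ R ∧ R.card ≤ r + δ - 1 ∧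
    ∀ c ∈ C, (∃ j ∈ R, c j ≠ 0) → δ ≤ (R.filter (fun j => c j ≠ 0)).card

/-- The parameters `[n, k, d]` attain the Singleton-type bound for `(r, δ)`-LRCs:
`d = n - k + 1 - (⌈k/r⌉ - 1)(δ - 1)`  (here `⌈k/r⌉ = (k + r - 1)/r`). -/
def SingletonOptimal (n k d r δ : ℕ) : Prop :=
  (d : ℤ) = (n : ℤ) - (k : ℤ) + 1 - ((((k + r - 1) / r : ℕ) : ℤ) - 1) * ((δ : ℤ) - 1)

/-- There exists an optimal `(r, δ)`-LRC over `F` with parameters `[n, k, d]`. -/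
def ExistsOptimalLRC (F : Type*) [Field F] [DecidableEq F] (n k d r δ : ℕ) : Prop :=
  ∃ C : Submodule F (Fin n → F),
    Module.finrank F C = k ∧ MinDistEq C d ∧ IsLRC C r δ ∧ SingletonOptimal n k d r δ

/-!
Codewords are the values of polynomials `∑ a i j * x ^ i * y ^ j` at points of the affine curve
`x ^ M = Tr y`, where `Tr` is the trace map of degree `N` to the subfield with `Q ^ c` elements.
The monomial `x ^ i * y ^ j` has weight `i * N + j * M`, its pole order at infinity, and modulo the
equation of the curve two monomials of equal weight differ by terms of smaller weight.

A polynomial whose leading weight is `w` has at most `w` zeros among the evaluation points: the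
functions on the set of zeros are spanned by monomials whose weights lie in the Apéry set of `w` in
the numerical semigroup generated by `M` and `N`, since `x ^ i * y ^ j` times the polynomial
vanishes there and expresses its leading monomial through smaller ones; this Apéry set has at most
`w` elements. For monomials of weight at most `t * M` this bounds the minimum distance below by
`(m - t) * M`, and a polynomial of degree `t` in `y` alone attains it.

The fibres of `y` are the repair groups: on such a fibre of `M` points a codeword is a polynomial
in `x` of degree less than `r`. The fibres are taken over the `y` for which `Tr y` is a `D`-th root
of unity, `D` being the greatest common divisor of `(q - 1) / M` and `Q ^ c - 1`: every `D`-th root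
of unity lies in the subfield, hence is the trace of `N` elements, and it is the `M`-th power of
`M` elements.
-/

section Counting

open Finset Polynomial

theorem card_fiber_eq_of_card_le {α β : Type*} [DecidableEq β] {s : Finset α} {t : Finset β}
    {f : α → β} {a b : ℕ} (hf : Set.MapsTo f s t) (hfib : ∀ u ∈ t, #{x ∈ s | f x = u} ≤ a)
    (ht : #t ≤ b) (hs : a * b ≤ #s) {u : β} (hu : u ∈ t) : #{x ∈ s | f x = u} = a := by
  refine (sum_eq_sum_iff_of_le hfib).1 (le_antisymm (sum_le_sum hfib) ?_) u hu
  calc ∑ _ ∈ t, a = a * #t := by rw [sum_const, smul_eq_mul, mul_comm]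
    _ ≤ a * b := Nat.mul_le_mul_left a ht
    _ ≤ #s := hs
    _ = ∑ v ∈ t, #{x ∈ s | f x = v} := card_eq_sum_card_fiberwise hf

theorem card_filter_eval_eq_zero_le {R ι : Type*} [CommRing R] [IsDomain R] [DecidableEq R]
    {p : R[X]} (hp : p ≠ 0) {s : Finset ι} {x : ι → R} (hx : Set.InjOn x s) :
    #{i ∈ s | p.eval (x i) = 0} ≤ p.natDegree := by
  rw [← card_image_of_injOn (hx.mono (coe_subset.2 (filter_subset _ s)))]
  refine card_le_degree_of_subset_roots fun u hu ↦ ?_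
  obtain ⟨i, hi, rfl⟩ := mem_image.1 hu
  exact (mem_roots hp).2 (mem_filter.1 hi).2

theorem card_filter_eval_eq_le {R : Type*} [CommRing R] [IsDomain R] [DecidableEq R]
    {p : R[X]} (hp : 0 < p.natDegree) (s : Finset R) (u : R) :
    #{x ∈ s | p.eval x = u} ≤ p.natDegree := by
  have hne : p - C u ≠ 0 := ne_zero_of_natDegree_gt (by rwa [natDegree_sub_C])
  simpa only [eval_sub, eval_C, sub_eq_zero, natDegree_sub_C, id_eq] using
    card_filter_eval_eq_zero_le hne (x := id) (s := s) (Set.injOn_id _)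

theorem card_filter_pow_eq_le {R : Type*} [CommRing R] [IsDomain R] [DecidableEq R] {n : ℕ}
    (hn : 0 < n) (s : Finset R) (u : R) : #{x ∈ s | x ^ n = u} ≤ n := by
  simpa using card_filter_eval_eq_le (p := (X : R[X]) ^ n) (by simpa using hn) s u

theorem card_filter_mem_of_card_fiber {ι κ : Type*} [Fintype ι] [DecidableEq κ] {f : ι → κ}
    {M : ℕ} (hfib : ∀ i, #{j | f j = f i} = M) {A : Finset κ} (hA : A ⊆ univ.image f) :
    #{i | f i ∈ A} = #A * M := by
  rw [card_eq_sum_card_fiberwise (f := f) (t := A) (fun i hi ↦ by simpa using hi)]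
  refine sum_const_nat fun u hu ↦ ?_
  obtain ⟨i, -, rfl⟩ := mem_image.1 (hA hu)
  rw [← hfib i, filter_filter]
  congr 1
  ext j
  simp +contextual [hu]

theorem card_filter_snd_eq {α β : Type*} [Fintype α] [DecidableEq α] [DecidableEq β]
    (s : Finset (α × β)) (v : β) : #{z ∈ s | z.2 = v} = #{u | (u, v) ∈ s} := by
  refine (card_nbij' (·, v) Prod.fst ?_ ?_ ?_ ?_).symm
  · intro u hu
    simpa using hu
  · rintro ⟨u, w⟩ hz
    obtain ⟨hzs, rfl⟩ := mem_filter.1 hz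
    simpa using hzs
  · intro u _
    rfl
  · rintro ⟨u, w⟩ hz
    obtain ⟨-, rfl⟩ := mem_filter.1 hz
    rfl

theorem exists_enumeration_of_card_fiber {α β : Type*} [DecidableEq β] {s : Finset α}
    {t : Finset β} {f : α → β} {M : ℕ} (hf : Set.MapsTo f s t)
    (hfib : ∀ v ∈ t, #{z ∈ s | f z = v} = M) :
    ∃ z : Fin (#t * M) → α, Function.Injective z ∧ (∀ i, z i ∈ s) ∧
      ∀ i, #{j | f (z j) = f (z i)} = M := by
  have hcard : #s = #t * M := by
    rw [card_eq_sum_card_fiberwise hf]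
    exact sum_const_nat hfib
  let e := (s.equivFinOfCardEq hcard).symm
  refine ⟨fun i ↦ e i, Subtype.val_injective.comp e.injective, fun i ↦ (e i).2, fun i ↦ ?_⟩
  refine (card_bij (fun j _ ↦ (e j : α)) ?_ ?_ ?_).trans (hfib _ (hf (e i).2))
  · intro j hj
    simpa using hj
  · intro j _ k _ hjk
    exact e.injective (Subtype.ext hjk)
  · intro z hz
    obtain ⟨hzs, hfz⟩ := mem_filter.1 hz
    exact ⟨e.symm ⟨z, hzs⟩, by simpa using hfz, by simp⟩

end Counting

section FiniteField

open Finset Polynomial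

variable {F : Type*} [Field F] [Fintype F]

/-- The polynomial `X + X ^ P + ⋯ + X ^ (P ^ e)`, which induces the trace map from the field with
`P ^ (e + 1)` elements to its subfield with `P` elements. -/
noncomputable def tracePoly (R : Type*) [Semiring R] (P e : ℕ) : R[X] :=
  ∑ k ∈ range (e + 1), X ^ P ^ k

theorem eval_tracePoly {R : Type*} [CommSemiring R] (P e : ℕ) (y : R) :
    (tracePoly R P e).eval y = ∑ k ∈ range (e + 1), y ^ P ^ k := by
  simp [tracePoly, eval_finsetSum]

theorem degree_sum_X_pow_pow_lt (R : Type*) [Semiring R] [Nontrivial R] {P : ℕ} (hP : 1 < P)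
    (e : ℕ) : (∑ k ∈ range e, (X : R[X]) ^ P ^ k).degree < (P ^ e : ℕ) := by
  refine (degree_sum_le _ _).trans_lt ((Finset.sup_lt_iff (WithBot.bot_lt_coe _)).2 fun k hk ↦ ?_)
  rw [degree_X_pow]
  exact_mod_cast Nat.pow_lt_pow_right hP (mem_range.1 hk)

theorem monic_tracePoly (R : Type*) [Semiring R] [Nontrivial R] {P : ℕ} (hP : 1 < P) (e : ℕ) :
    (tracePoly R P e).Monic := by
  rw [tracePoly, sum_range_succ, add_comm]
  exact monic_X_pow_add (degree_sum_X_pow_pow_lt R hP e)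

theorem natDegree_tracePoly (R : Type*) [Semiring R] [Nontrivial R] {P : ℕ} (hP : 1 < P) (e : ℕ) :
    (tracePoly R P e).natDegree = P ^ e := by
  rw [tracePoly, sum_range_succ, natDegree_add_eq_right_of_degree_lt, natDegree_X_pow]
  simpa using degree_sum_X_pow_pow_lt R hP e

theorem eval_tracePoly_pow {P e : ℕ} (hF : Fintype.card F = P ^ (e + 1)) (y : F) :
    (tracePoly F P e).eval y ^ P = (tracePoly F P e).eval y := by
  obtain ⟨p, _, n, hp, hcard⟩ := FiniteField.card' F
  have : Fact p.Prime := ⟨hp⟩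
  obtain ⟨k, -, rfl⟩ : ∃ k ≤ (n : ℕ), P = p ^ k :=
    (Nat.dvd_prime_pow hp).1 (hcard ▸ hF ▸ dvd_pow_self P e.succ_ne_zero)
  calc (tracePoly F (p ^ k) e).eval y ^ p ^ k = ∑ i ∈ range (e + 1), y ^ (p ^ k) ^ (i + 1) := by
        simp only [eval_tracePoly, sum_pow_char_pow, pow_succ, pow_mul]
    _ = (tracePoly F (p ^ k) e).eval y := by
        rw [eval_tracePoly, sum_range_succ, sum_range_succ' _ e, ← hF, FiniteField.pow_card,
          pow_zero, pow_one]

variable [DecidableEq F]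

theorem card_filter_pow_eq_of_pow_eq_one {M K : ℕ} (hMK : M * K = Fintype.card F - 1) {v : F}
    (hv : v ^ K = 1) : #{x : F | x ^ M = v} = M := by
  have hpos : 0 < M * K := hMK ▸ Nat.sub_pos_of_lt Fintype.one_lt_card
  have hM : 0 < M := Nat.pos_of_mul_pos_right hpos
  have hK : 0 < K := Nat.pos_of_mul_pos_left hpos
  have hfiber : #{x ∈ univ.erase (0 : F) | x ^ M = v} = M := by
    refine card_fiber_eq_of_card_le (t := {w : F | w ^ K = 1}) (b := K) ?_
      (fun w _ ↦ card_filter_pow_eq_le hM _ w) (card_filter_pow_eq_le hK _ 1) ?_ (by simpa)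
    · intro x hx
      have hx0 : x ≠ 0 := by simpa using hx
      simpa [← pow_mul, hMK] using FiniteField.pow_card_sub_one_eq_one x hx0
    · rw [card_erase_of_mem (mem_univ _), card_univ, hMK]
  have hne : ∀ x : F, x ^ M = v → x ≠ 0 := by
    rintro x rfl rfl
    simp [hM.ne', hK.ne'] at hv
  refine Eq.trans (congrArg card (Finset.ext fun x ↦ ?_)) hfiber
  simpa using hne x

theorem card_filter_pow_eq_one {D : ℕ} (hD : D ∣ Fintype.card F - 1) :
    #{v : F | v ^ D = 1} = D := by
  obtain ⟨K, hK⟩ := hD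
  exact card_filter_pow_eq_of_pow_eq_one hK.symm (one_pow K)

theorem card_filter_eval_tracePoly_eq {P e : ℕ} (hF : Fintype.card F = P ^ (e + 1)) {v : F}
    (hv : v ^ P = v) : #{y : F | (tracePoly F P e).eval y = v} = P ^ e := by
  have hP : 1 < P := (Nat.one_lt_pow_iff e.succ_ne_zero).1 (hF ▸ Fintype.one_lt_card)
  refine card_fiber_eq_of_card_le (t := {u : F | u ^ P = u}) (b := P) ?_ ?_ ?_ ?_ (by simpa)
  · intro y _
    simpa using eval_tracePoly_pow hF y
  · intro u _
    have hdeg := natDegree_tracePoly F hP e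
    rw [← hdeg]
    exact card_filter_eval_eq_le (by rw [hdeg]; positivity) _ u
  · have hroots := card_filter_eval_eq_zero_le (FiniteField.X_pow_card_sub_X_ne_zero F hP)
      (s := univ) (x := id) (Set.injOn_id _)
    simpa only [eval_sub, eval_pow, eval_X, sub_eq_zero, id_eq,
      FiniteField.X_pow_card_sub_X_natDegree_eq F hP] using hroots
  · rw [card_univ, hF, pow_succ]

theorem card_filter_eval_tracePoly_pow_eq_one {P e D : ℕ} (hF : Fintype.card F = P ^ (e + 1))
    (hD : D ∣ P - 1) :
    #{y : F | (tracePoly F P e).eval y ^ D = 1} = D * P ^ e := by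
  have hDF : D ∣ Fintype.card F - 1 := by
    rw [hF]
    exact hD.trans (Nat.sub_one_dvd_pow_sub_one P (e + 1))
  have hfiber : ∀ v ∈ ({v : F | v ^ D = 1} : Finset F),
      #{y ∈ ({y : F | (tracePoly F P e).eval y ^ D = 1} : Finset F) |
        (tracePoly F P e).eval y = v} = P ^ e := by
    intro v hv
    have hvD : v ^ D = 1 := by simpa using hv
    have hvP : v ^ P = v := by
      obtain ⟨k, hk⟩ := hD
      have hP : P ≠ 0 := by rintro rfl; simp at hF
      rw [← Nat.sub_one_add_one hP, hk, pow_succ, pow_mul, hvD, one_pow, one_mul]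
    rw [← card_filter_eval_tracePoly_eq hF hvP, filter_filter]
    congr 1
    ext y
    simp +contextual [hvD]
  rw [card_eq_sum_card_fiberwise (f := fun y ↦ (tracePoly F P e).eval y)
    (t := {v : F | v ^ D = 1}) (fun y hy ↦ by simpa using hy), sum_congr rfl hfiber, sum_const,
    smul_eq_mul, card_filter_pow_eq_one hDF]

end FiniteField

section Apery

open Finset

/-- The Apéry set of an additive submonoid `S` of `ℕ` with respect to `a`: the elements of `S` that
do not remain in `S` after subtracting `a`, phrased without subtraction. -/
def aperySet (S : AddSubmonoid ℕ) (a : ℕ) : Set ℕ :=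
  {n | n ∈ S ∧ ∀ k ∈ S, n ≠ a + k}

variable {S : AddSubmonoid ℕ} {a : ℕ}

theorem eq_of_mem_aperySet_of_modEq (ha : a ∈ S) {n n' : ℕ} (hn : n ∈ aperySet S a)
    (hn' : n' ∈ aperySet S a) (hmod : n ≡ n' [MOD a]) (hle : n ≤ n') : n = n' := by
  obtain ⟨k, hk⟩ := (Nat.modEq_iff_dvd' hle).1 hmod
  cases k with
  | zero => omega
  | succ k =>
    refine absurd ?_ (hn'.2 (n + k * a) (add_mem hn.1 (nsmul_mem ha k)))
    rw [mul_add, mul_comm a k] at hk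
    omega

theorem injOn_mod_aperySet (ha : a ∈ S) : Set.InjOn (· % a) (aperySet S a) := by
  intro n hn n' hn' hmod
  rcases le_total n n' with hle | hle
  · exact eq_of_mem_aperySet_of_modEq ha hn hn' hmod hle
  · exact (eq_of_mem_aperySet_of_modEq ha hn' hn hmod.symm hle).symm

theorem mapsTo_mod_aperySet : Set.MapsTo (· % a) (aperySet S a) (range a) := by
  intro n hn
  have ha : a ≠ 0 := by
    rintro rfl
    exact hn.2 n hn.1 (zero_add n).symm
  simpa using Nat.mod_lt n (Nat.pos_of_ne_zero ha)

theorem finite_aperySet (ha : a ∈ S) : (aperySet S a).Finite :=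
  Set.Finite.of_injOn mapsTo_mod_aperySet (injOn_mod_aperySet ha) (finite_toSet _)

theorem ncard_aperySet_le (ha : a ∈ S) : (aperySet S a).ncard ≤ a := by
  simpa using Set.ncard_le_ncard_of_injOn _ mapsTo_mod_aperySet (injOn_mod_aperySet ha)
    (finite_toSet (range a))

end Apery

section Footprint

open Finset Polynomial

/-- The monomial `x ^ i * y ^ j` with exponents `p = (i, j)`. -/
def pairMonomial {A : Type*} [Monoid A] (x y : A) (p : ℕ × ℕ) : A :=
  x ^ p.1 * y ^ p.2

/-- The weight `i * N + j * M` of the exponents `(i, j)`: the order of the pole that `x ^ i * y ^ j`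
has at the point at infinity of a curve `x ^ M = L(y)` with `L` of degree `N` prime to `M`. -/
def poleOrder (M N : ℕ) : ℕ × ℕ →+ ℕ :=
  (AddMonoidHom.mulRight N).coprod (AddMonoidHom.mulRight M)

theorem poleOrder_apply (M N : ℕ) (p : ℕ × ℕ) : poleOrder M N p = p.1 * N + p.2 * M :=
  rfl

variable (F : Type*) {A : Type*} [Field F] [CommRing A] [Algebra F A]

theorem pairMonomial_add (x y : A) (p u : ℕ × ℕ) :
    pairMonomial x y (p + u) = pairMonomial x y p * pairMonomial x y u := by
  simp only [pairMonomial, Prod.fst_add, Prod.snd_add, pow_add]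
  exact mul_mul_mul_comm _ _ _ _

/-- The span of the monomials in `x` and `y` whose pole order is less than `n`. -/
def lowerSpan (M N : ℕ) (x y : A) (n : ℕ) : Submodule F A :=
  Submodule.span F (pairMonomial x y '' {p | poleOrder M N p < n})

variable {F} {M N : ℕ} {x y : A}

theorem pairMonomial_mem_lowerSpan {p : ℕ × ℕ} {n : ℕ} (hp : poleOrder M N p < n) :
    pairMonomial x y p ∈ lowerSpan F M N x y n :=
  Submodule.subset_span ⟨p, hp, rfl⟩

theorem lowerSpan_le_iff {n : ℕ} {S : Submodule F A} :
    lowerSpan F M N x y n ≤ S ↔ ∀ p, poleOrder M N p < n → pairMonomial x y p ∈ S := by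
  rw [lowerSpan, Submodule.span_le, Set.image_subset_iff]
  rfl

theorem mul_pairMonomial_mem_lowerSpan {z : A} {n : ℕ} (hz : z ∈ lowerSpan F M N x y n)
    (u : ℕ × ℕ) : z * pairMonomial x y u ∈ lowerSpan F M N x y (n + poleOrder M N u) := by
  suffices lowerSpan F M N x y n ≤ (lowerSpan F M N x y (n + poleOrder M N u)).comap
      (LinearMap.mulRight F (pairMonomial x y u)) from this hz
  refine lowerSpan_le_iff.2 fun p hp ↦ ?_
  rw [Submodule.mem_comap, LinearMap.mulRight_apply, ← pairMonomial_add]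
  refine pairMonomial_mem_lowerSpan ?_
  rw [map_add]
  exact Nat.add_lt_add_right hp _

theorem exists_pairMonomial_mem_lowerSpan {I : Finset (ℕ × ℕ)} (hI : Set.InjOn (poleOrder M N) I)
    {a : ℕ × ℕ → F} (ha : ∃ p ∈ I, a p ≠ 0) (hsum : ∑ p ∈ I, a p • pairMonomial x y p = 0) :
    ∃ p ∈ I, pairMonomial x y p ∈ lowerSpan F M N x y (poleOrder M N p) := by
  classical
  obtain ⟨p, hp, hmax⟩ := exists_max_image {p ∈ I | a p ≠ 0} (poleOrder M N)
    (filter_nonempty_iff.2 ha)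
  obtain ⟨hpI, hap⟩ := mem_filter.1 hp
  refine ⟨p, hpI, (Submodule.smul_mem_iff _ hap).1 ?_⟩
  rw [← add_sum_erase _ _ hpI] at hsum
  rw [eq_neg_of_add_eq_zero_left hsum]
  refine neg_mem (sum_mem fun u hu ↦ ?_)
  obtain ⟨hup, huI⟩ := mem_erase.1 hu
  rcases eq_or_ne (a u) 0 with hau | hau
  · simp [hau]
  · have hle : poleOrder M N u ≤ poleOrder M N p := hmax u (mem_filter.2 ⟨huI, hau⟩)
    have hne : poleOrder M N u ≠ poleOrder M N p := fun h ↦ hup (hI huI hpI h)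
    exact Submodule.smul_mem _ _ (pairMonomial_mem_lowerSpan (hle.lt_of_ne hne))

theorem pairMonomial_sub_mem_lowerSpan_of_mul (hM : 0 < M) {L : F[X]} (hL : L.Monic)
    (hdeg : L.natDegree = N) (hxy : x ^ M = aeval y L) (i j k : ℕ) :
    pairMonomial x y (i + k * M, j) - pairMonomial x y (i, j + k * N) ∈
      lowerSpan F M N x y (poleOrder M N (i + k * M, j)) := by
  have hdegk : (L ^ k).natDegree = k * N := by rw [hL.natDegree_pow, hdeg]
  have hxk : x ^ (k * M) = ∑ l ∈ range (k * N), (L ^ k).coeff l • y ^ l + y ^ (k * N) := by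
    have hlead : (L ^ k).coeff (k * N) = 1 := hdegk ▸ hL.pow k
    rw [mul_comm k M, pow_mul, hxy, ← map_pow, aeval_eq_sum_range, hdegk, sum_range_succ, hlead,
      one_smul]
  have hexpand : pairMonomial x y (i + k * M, j) - pairMonomial x y (i, j + k * N) =
      ∑ l ∈ range (k * N), (L ^ k).coeff l • pairMonomial x y (i, j + l) := by
    simp only [pairMonomial, pow_add, hxk, mul_add, add_mul, mul_sum, sum_mul, mul_smul_comm,
      smul_mul_assoc, mul_comm (y ^ j), mul_assoc, add_sub_cancel_right]
  rw [hexpand]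
  refine sum_mem fun l hl ↦ Submodule.smul_mem _ _ (pairMonomial_mem_lowerSpan ?_)
  have hlt : l * M < k * N * M := Nat.mul_lt_mul_of_pos_right (mem_range.1 hl) hM
  simp only [poleOrder_apply]
  linarith

theorem exists_eq_of_poleOrder_eq (hM : 0 < M) (hcop : M.Coprime N) {p p' : ℕ × ℕ}
    (hle : p'.1 ≤ p.1) (hw : poleOrder M N p = poleOrder M N p') :
    ∃ k, p = (p'.1 + k * M, p.2) ∧ p' = (p'.1, p.2 + k * N) := by
  obtain ⟨d, hd⟩ := Nat.exists_eq_add_of_le hle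
  rw [poleOrder_apply, poleOrder_apply, hd] at hw
  have hweight : d * N + p.2 * M = p'.2 * M := by linarith
  have hdvd : M ∣ d * N :=
    (Nat.dvd_add_left (Dvd.intro_left _ rfl)).1 (hweight ▸ Dvd.intro_left _ rfl)
  obtain ⟨k, rfl⟩ := hcop.dvd_of_dvd_mul_right hdvd
  refine ⟨k, Prod.ext (by rw [hd, mul_comm]) rfl, Prod.ext rfl ?_⟩
  refine Nat.eq_of_mul_eq_mul_right hM ?_
  rw [← hweight]
  ring

theorem pairMonomial_sub_mem_lowerSpan (hM : 0 < M) (hcop : M.Coprime N) {L : F[X]}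
    (hL : L.Monic) (hdeg : L.natDegree = N) (hxy : x ^ M = aeval y L) {p p' : ℕ × ℕ}
    (hw : poleOrder M N p = poleOrder M N p') :
    pairMonomial x y p - pairMonomial x y p' ∈ lowerSpan F M N x y (poleOrder M N p) := by
  wlog hle : p'.1 ≤ p.1 generalizing p p'
  · rw [← neg_mem_iff, neg_sub, hw]
    exact this hw.symm (Nat.le_of_not_le hle)
  obtain ⟨k, hp, hp'⟩ := exists_eq_of_poleOrder_eq hM hcop hle hw
  rw [hp, hp']
  exact pairMonomial_sub_mem_lowerSpan_of_mul hM hL hdeg hxy _ _ k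

/-- All monomials of a given pole order agree modulo monomials of lower pole order, so it suffices
that `S` contains one of each pole order in the Apéry set of the pole order of `p₀`; any other
monomial is, up to such lower terms, a multiple of the reducible monomial `p₀`. -/
theorem pairMonomial_mem_of_aperySet
    (hcongr : ∀ p p', poleOrder M N p = poleOrder M N p' →
      pairMonomial x y p - pairMonomial x y p' ∈ lowerSpan F M N x y (poleOrder M N p))
    {p₀ : ℕ × ℕ} (hp₀ : pairMonomial x y p₀ ∈ lowerSpan F M N x y (poleOrder M N p₀))
    {S : Submodule F A}
    (hS : ∀ n ∈ aperySet (AddMonoidHom.mrange (poleOrder M N)) (poleOrder M N p₀),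
      ∃ p, poleOrder M N p = n ∧ pairMonomial x y p ∈ S)
    (p : ℕ × ℕ) : pairMonomial x y p ∈ S := by
  induction hn : poleOrder M N p using Nat.strong_induction_on generalizing p with
  | _ n ih =>
    subst hn
    have hlower : lowerSpan F M N x y (poleOrder M N p) ≤ S :=
      lowerSpan_le_iff.2 fun u hu ↦ ih _ hu u rfl
    suffices ∃ p', poleOrder M N p = poleOrder M N p' ∧ pairMonomial x y p' ∈ S by
      obtain ⟨p', hw, hp'⟩ := this
      exact sub_add_cancel (pairMonomial x y p) _ ▸ add_mem (hlower (hcongr p p' hw)) hp'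
    by_cases hp : poleOrder M N p ∈
        aperySet (AddMonoidHom.mrange (poleOrder M N)) (poleOrder M N p₀)
    · obtain ⟨p', hw, hp'⟩ := hS _ hp
      exact ⟨p', hw.symm, hp'⟩
    · obtain ⟨u, hu⟩ : ∃ u, poleOrder M N p = poleOrder M N p₀ + poleOrder M N u := by
        simpa [aperySet] using hp
      refine ⟨p₀ + u, by rw [hu, map_add], hlower ?_⟩
      rw [pairMonomial_add, hu]
      exact mul_pairMonomial_mem_lowerSpan hp₀ u

theorem finrank_span_pairMonomial_le
    (hcongr : ∀ p p', poleOrder M N p = poleOrder M N p' →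
      pairMonomial x y p - pairMonomial x y p' ∈ lowerSpan F M N x y (poleOrder M N p))
    {p₀ : ℕ × ℕ} (hp₀ : pairMonomial x y p₀ ∈ lowerSpan F M N x y (poleOrder M N p₀)) :
    Module.finrank F (Submodule.span F (Set.range (pairMonomial x y))) ≤ poleOrder M N p₀ := by
  classical
  set Λ := AddMonoidHom.mrange (poleOrder M N)
  have hmem : poleOrder M N p₀ ∈ Λ := ⟨p₀, rfl⟩
  have hrep : ∀ n ∈ aperySet Λ (poleOrder M N p₀), ∃ p, poleOrder M N p = n := fun n hn ↦ hn.1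
  choose! φ hφ using hrep
  have hfin := finite_aperySet hmem
  let B : Finset A := hfin.toFinset.image (pairMonomial x y ∘ φ)
  have hspan : Submodule.span F (Set.range (pairMonomial x y)) ≤ Submodule.span F B := by
    rw [Submodule.span_le, Set.range_subset_iff]
    refine pairMonomial_mem_of_aperySet hcongr hp₀ fun n hn ↦ ⟨φ n, hφ n hn, ?_⟩
    exact Submodule.subset_span (mem_image_of_mem _ (hfin.mem_toFinset.2 hn))
  calc _ ≤ Module.finrank F (Submodule.span F (B : Set A)) := Submodule.finrank_mono hspan
    _ ≤ #B := finrank_span_finset_le_card B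
    _ ≤ #hfin.toFinset := card_image_le
    _ = (aperySet Λ (poleOrder M N p₀)).ncard := (Set.ncard_eq_toFinset_card _ hfin).symm
    _ ≤ poleOrder M N p₀ := ncard_aperySet_le hmem

theorem span_range_pairMonomial :
    Submodule.span F (Set.range (pairMonomial x y)) =
      Subalgebra.toSubmodule (Algebra.adjoin F {x, y}) := by
  rw [Algebra.adjoin_eq_span]
  congr 1
  ext z
  simp [Submonoid.mem_closure_pair, pairMonomial]

theorem finrank_adjoin_pair_le (hM : 0 < M) (hcop : M.Coprime N) {L : F[X]} (hL : L.Monic)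
    (hdeg : L.natDegree = N) (hxy : x ^ M = aeval y L) {I : Finset (ℕ × ℕ)}
    (hI : Set.InjOn (poleOrder M N) I) {W : ℕ} (hW : ∀ p ∈ I, poleOrder M N p ≤ W)
    {a : ℕ × ℕ → F} (ha : ∃ p ∈ I, a p ≠ 0) (hsum : ∑ p ∈ I, a p • pairMonomial x y p = 0) :
    Module.finrank F (Algebra.adjoin F {x, y}) ≤ W := by
  obtain ⟨p₀, hp₀I, hp₀⟩ := exists_pairMonomial_mem_lowerSpan hI ha hsum
  rw [← Subalgebra.finrank_toSubmodule, ← span_range_pairMonomial]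
  exact (finrank_span_pairMonomial_le
    (fun _ _ ↦ pairMonomial_sub_mem_lowerSpan hM hcop hL hdeg hxy) hp₀).trans (hW p₀ hp₀I)

end Footprint

section Evaluation

open Finset Polynomial

variable {F ι : Type*} [Field F]

theorem subalgebra_pi_eq_top_of_separatesPoints [Finite ι] {S : Subalgebra F (ι → F)}
    (hS : (S : Set (ι → F)).SeparatesPoints) : S = ⊤ := by
  classical
  have := Fintype.ofFinite ι
  have hsep : ∀ i j, i ≠ j → ∃ g ∈ S, g i = 1 ∧ g j = 0 := by
    intro i j hij
    obtain ⟨g, hg, hgij⟩ := hS hij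
    refine ⟨(g i - g j)⁻¹ • (g - algebraMap F _ (g j)),
      S.smul_mem (sub_mem hg (S.algebraMap_mem _)) _, ?_, ?_⟩
    · simp [inv_mul_cancel₀ (sub_ne_zero.2 hgij)]
    · simp
  choose! g hgS hg1 hg0 using hsep
  have hsingle : ∀ i, Pi.single i 1 ∈ S := by
    intro i
    have hprod : (Pi.single i 1 : ι → F) = ∏ j ∈ univ.erase i, g i j := by
      ext k
      rw [prod_apply]
      rcases eq_or_ne k i with rfl | hk
      · rw [Pi.single_eq_same, prod_eq_one fun j hj ↦ hg1 k j (ne_of_mem_erase hj).symm]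
      · rw [Pi.single_eq_of_ne hk,
          prod_eq_zero (f := (g i · k)) (mem_erase.2 ⟨hk, mem_univ k⟩) (hg0 i k hk.symm)]
    exact hprod ▸ prod_mem fun j hj ↦ hgS i j (ne_of_mem_erase hj).symm
  refine eq_top_iff.2 fun v _ ↦ ?_
  rw [pi_eq_sum_univ' v]
  exact sum_mem fun i _ ↦ S.smul_mem (hsingle i) _

theorem adjoin_pair_eq_top_of_injective [Finite ι] {x y : ι → F}
    (hxy : Function.Injective fun i ↦ (x i, y i)) : Algebra.adjoin F {x, y} = ⊤ := by
  refine subalgebra_pi_eq_top_of_separatesPoints fun i j hij ↦ ?_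
  have hor : x i ≠ x j ∨ y i ≠ y j := by
    by_contra! h
    exact hij (hxy (Prod.ext h.1 h.2))
  rcases hor with h | h
  · exact ⟨x, Algebra.subset_adjoin (by simp), h⟩
  · exact ⟨y, Algebra.subset_adjoin (by simp), h⟩

/-- The evaluation code spanned by the words `(x i ^ p.1 * y i ^ p.2)_i` for the exponents `p ∈ I`,
where `(x i, y i)` are the evaluation points. -/
def evalCode (I : Finset (ℕ × ℕ)) (x y : ι → F) : Submodule F (ι → F) :=
  Submodule.span F (pairMonomial x y '' I)

variable {I : Finset (ℕ × ℕ)} {x y c : ι → F}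

theorem mem_evalCode :
    c ∈ evalCode I x y ↔ ∃ a : ℕ × ℕ → F, ∑ p ∈ I, a p • pairMonomial x y p = c :=
  Submodule.mem_span_image_finset_iff_exists_fun' F

theorem exists_polynomial_eq_of_mem_evalCode {r : ℕ} (hI : ∀ p ∈ I, p.1 < r)
    (hc : c ∈ evalCode I x y) (u : F) :
    ∃ G ∈ degreeLT F r, ∀ i, y i = u → c i = G.eval (x i) := by
  obtain ⟨a, rfl⟩ := mem_evalCode.1 hc
  refine ⟨∑ p ∈ I, C (a p * u ^ p.2) * X ^ p.1, sum_mem fun p hp ↦ ?_, ?_⟩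
  · rw [mem_degreeLT]
    exact (degree_C_mul_X_pow_le _ _).trans_lt (by exact_mod_cast hI p hp)
  · rintro i rfl
    simp only [Finset.sum_apply, Pi.smul_apply, smul_eq_mul, pairMonomial, Pi.mul_apply,
      Pi.pow_apply, eval_finsetSum, eval_mul, eval_C, eval_pow, eval_X]
    exact sum_congr rfl fun p _ ↦ by ring

theorem aeval_mem_evalCode {P : F[X]} (hI : ∀ j ≤ P.natDegree, (0, j) ∈ I) :
    aeval y P ∈ evalCode I x y := by
  rw [aeval_eq_sum_range]
  refine sum_mem fun j hj ↦ Submodule.smul_mem _ _ (Submodule.subset_span ⟨(0, j), ?_, ?_⟩)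
  · exact hI j (Nat.lt_succ_iff.1 (mem_range.1 hj))
  · simp [pairMonomial]

theorem card_filter_ne_zero_ge_of_mem_evalCode [DecidableEq F] {r : ℕ}
    (hI : ∀ p ∈ I, p.1 < r) (hc : c ∈ evalCode I x y) {R : Finset ι} {u : F}
    (hR : ∀ i ∈ R, y i = u) (hx : Set.InjOn x R) (hne : ∃ i ∈ R, c i ≠ 0) :
    #R + 1 - r ≤ #{i ∈ R | c i ≠ 0} := by
  obtain ⟨G, hG, hGc⟩ := exists_polynomial_eq_of_mem_evalCode hI hc u
  obtain ⟨j, hjR, hj⟩ := hne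
  have hG0 : G ≠ 0 := by
    rintro rfl
    exact hj (by simpa using hGc j (hR j hjR))
  have hdeg : G.natDegree < r := (natDegree_lt_iff_degree_lt hG0).2 (mem_degreeLT.1 hG)
  have hzeros : #{i ∈ R | c i = 0} ≤ G.natDegree := by
    rw [filter_congr fun i hi ↦ by rw [hGc i (hR i hi)]]
    exact card_filter_eval_eq_zero_le hG0 hx
  have hsplit : #{i ∈ R | c i = 0} + #{i ∈ R | c i ≠ 0} = #R := card_filter_add_card_filter_not _
  omega

section Curve

variable [Fintype ι] {M N W : ℕ} {L : F[X]}

theorem card_zeros_le [DecidableEq F] (hM : 0 < M) (hcop : M.Coprime N) (hL : L.Monic)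
    (hdeg : L.natDegree = N) (hinj : Function.Injective fun i ↦ (x i, y i))
    (hxy : ∀ i, x i ^ M = L.eval (y i)) (hI : Set.InjOn (poleOrder M N) I)
    (hW : ∀ p ∈ I, poleOrder M N p ≤ W) {a : ℕ × ℕ → F} (ha : ∃ p ∈ I, a p ≠ 0) :
    #{i | (∑ p ∈ I, a p • pairMonomial x y p) i = 0} ≤ W := by
  let Z := {i // (∑ p ∈ I, a p • pairMonomial x y p) i = 0}
  let xZ : Z → F := fun i ↦ x i
  let yZ : Z → F := fun i ↦ y i
  have hcurve : xZ ^ M = aeval yZ L := by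
    ext i
    simpa [xZ, yZ, aeval_pi_apply] using hxy i
  have hsum : ∑ p ∈ I, a p • pairMonomial xZ yZ p = 0 := by
    ext i
    simpa [pairMonomial, xZ, yZ] using i.2
  have htop : Algebra.adjoin F {xZ, yZ} = ⊤ :=
    adjoin_pair_eq_top_of_injective fun i j hij ↦ Subtype.ext (hinj hij)
  have hrank := finrank_adjoin_pair_le hM hcop hL hdeg hcurve hI hW ha hsum
  rwa [htop, subalgebra_top_finrank_eq_submodule_top_finrank, finrank_top,
    Module.finrank_fintype_fun_eq_card, Fintype.card_subtype] at hrank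

theorem finrank_evalCode (hM : 0 < M) (hcop : M.Coprime N) (hL : L.Monic)
    (hdeg : L.natDegree = N) (hinj : Function.Injective fun i ↦ (x i, y i))
    (hxy : ∀ i, x i ^ M = L.eval (y i)) (hI : Set.InjOn (poleOrder M N) I)
    (hW : ∀ p ∈ I, poleOrder M N p ≤ W) (hWι : W < Fintype.card ι) :
    Module.finrank F (evalCode I x y) = #I := by
  have hli : LinearIndepOn F (pairMonomial x y) (I : Set (ℕ × ℕ)) := by
    classical
    refine linearIndepOn_finset_iff.2 fun a ha ↦ ?_
    by_contra! hne
    have hzeros := card_zeros_le hM hcop hL hdeg hinj hxy hI hW hne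
    simp only [ha, Pi.zero_apply, filter_true, card_univ] at hzeros
    omega
  rw [evalCode, Set.image_eq_range]
  exact (finrank_span_eq_card hli).trans (Fintype.card_coe I)

theorem minDistGe_evalCode [DecidableEq F] {n : ℕ} {x y : Fin n → F} (hM : 0 < M)
    (hcop : M.Coprime N) (hL : L.Monic) (hdeg : L.natDegree = N)
    (hinj : Function.Injective fun i ↦ (x i, y i)) (hxy : ∀ i, x i ^ M = L.eval (y i))
    (hI : Set.InjOn (poleOrder M N) I) (hW : ∀ p ∈ I, poleOrder M N p ≤ W) :
    MinDistGe (evalCode I x y) (n - W) := by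
  intro c hc hc0
  obtain ⟨a, rfl⟩ := mem_evalCode.1 hc
  have ha : ∃ p ∈ I, a p ≠ 0 := by
    by_contra! h
    exact hc0 (sum_eq_zero fun p hp ↦ by rw [h p hp, zero_smul])
  have hzeros := card_zeros_le hM hcop hL hdeg hinj hxy hI hW ha
  set c := ∑ p ∈ I, a p • pairMonomial x y p
  have hsplit : #{i | c i = 0} + hammingWt c = n := by
    simpa [hammingWt] using card_filter_add_card_filter_not (s := univ) (fun i ↦ c i = 0)
  omega

end Curve

end Evaluation

section LRC

open Finset Polynomial

variable {F : Type*} [Field F] [DecidableEq F]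

theorem isLRC_evalCode {n r M : ℕ} {x y : Fin n → F} {I : Finset (ℕ × ℕ)}
    (hinj : Function.Injective fun i ↦ (x i, y i)) (hfib : ∀ i, #{j | y j = y i} = M)
    (hI : ∀ p ∈ I, p.1 < r) : IsLRC (evalCode I x y) r (M + 1 - r) := by
  refine fun i ↦ ⟨({j | y j = y i} : Finset _), by simp, by rw [hfib]; omega, fun c hc hne ↦ ?_⟩
  have hR : ∀ j ∈ ({j | y j = y i} : Finset _), y j = y i := by simp
  rw [← hfib i]
  refine card_filter_ne_zero_ge_of_mem_evalCode hI hc hR (fun j hj k hk hjk ↦ hinj ?_) hne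
  exact Prod.ext hjk ((hR j hj).trans (hR k hk).symm)

theorem exists_mem_evalCode_hammingWt_eq {m M t : ℕ} {x y : Fin (m * M) → F}
    {I : Finset (ℕ × ℕ)} (hM : 0 < M) (hfib : ∀ i, #{j | y j = y i} = M) (htm : t ≤ m)
    (hI : ∀ j ≤ t, (0, j) ∈ I) : ∃ c ∈ evalCode I x y, hammingWt c = (m - t) * M := by
  have himage : #(univ.image y) = m := by
    refine Nat.eq_of_mul_eq_mul_right hM ?_
    rw [← card_filter_mem_of_card_fiber hfib subset_rfl]
    simp
  obtain ⟨A, hA, hAt⟩ := exists_subset_card_eq (htm.trans_eq himage.symm)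
  let P : F[X] := ∏ u ∈ A, (X - C u)
  have hdeg : P.natDegree = t := (natDegree_finsetProd_X_sub_C_eq_card A id).trans hAt
  refine ⟨aeval y P, aeval_mem_evalCode (hdeg ▸ hI), ?_⟩
  have hsupp : hammingWt (aeval y P) = #{i | y i ∉ A} := by
    rw [hammingWt]
    congr! 2 with i
    simp [P, prod_eq_zero_iff, sub_eq_zero]
  have hmem : #{i | y i ∈ A} = t * M := hAt ▸ card_filter_mem_of_card_fiber hfib hA
  have hsplit : #{i | y i ∈ A} + #{i | y i ∉ A} = m * M := by
    simpa using card_filter_add_card_filter_not (s := univ) (fun i ↦ y i ∈ A)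
  rw [hsupp, Nat.sub_mul]
  omega

end LRC

section OptimalCodes

open Finset Polynomial

/-- The exponents `(i, j)` with `i < r` and `j < t`, together with `(0, t)`, so that the codewords
are `G(x, y) + a * y ^ t` with `G` of degree less than `r` in `x` and less than `t` in `y`. -/
def lrcExponents (r t : ℕ) : Finset (ℕ × ℕ) :=
  insert (0, t) (range r ×ˢ range t)

theorem mem_lrcExponents {r t : ℕ} {p : ℕ × ℕ} :
    p ∈ lrcExponents r t ↔ p = (0, t) ∨ p.1 < r ∧ p.2 < t := by
  simp [lrcExponents]

theorem card_lrcExponents (r t : ℕ) : #(lrcExponents r t) = t * r + 1 := by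
  rw [lrcExponents, card_insert_of_notMem (by simp), card_product, card_range, card_range,
    mul_comm]

theorem fst_lt_of_mem_lrcExponents {r t : ℕ} (hr : 0 < r) {p : ℕ × ℕ}
    (hp : p ∈ lrcExponents r t) : p.1 < r := by
  rcases mem_lrcExponents.1 hp with rfl | ⟨hi, -⟩ <;> assumption

theorem zero_mk_mem_lrcExponents {r t j : ℕ} (hr : 0 < r) (hj : j ≤ t) :
    (0, j) ∈ lrcExponents r t := by
  rw [mem_lrcExponents, Prod.mk.injEq]
  rcases hj.eq_or_lt with rfl | hlt
  · exact Or.inl ⟨rfl, rfl⟩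
  · exact Or.inr ⟨hr, hlt⟩

theorem fst_mul_lt_of_mem_lrcExponents {r t M N : ℕ} (hr : 0 < r) (hrN : (r - 1) * N < M)
    {p : ℕ × ℕ} (hp : p ∈ lrcExponents r t) : p.1 * N < M :=
  (Nat.mul_le_mul_right N (Nat.le_sub_one_of_lt (fst_lt_of_mem_lrcExponents hr hp))).trans_lt hrN

theorem poleOrder_le_of_mem_lrcExponents {r t M N : ℕ} (hr : 0 < r) (hrN : (r - 1) * N < M)
    {p : ℕ × ℕ} (hp : p ∈ lrcExponents r t) : poleOrder M N p ≤ t * M := by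
  rw [poleOrder_apply]
  rcases mem_lrcExponents.1 hp with rfl | ⟨-, hj⟩
  · simp
  · calc p.1 * N + p.2 * M ≤ M + p.2 * M :=
        Nat.add_le_add_right (fst_mul_lt_of_mem_lrcExponents hr hrN hp).le _
      _ = (p.2 + 1) * M := by ring
      _ ≤ t * M := Nat.mul_le_mul_right M hj

theorem injOn_poleOrder_lrcExponents {r t M N : ℕ} (hr : 0 < r) (hN : 0 < N)
    (hrN : (r - 1) * N < M) : Set.InjOn (poleOrder M N) (lrcExponents r t) := by
  have hM : 0 < M := Nat.zero_lt_of_lt hrN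
  intro p hp p' hp' hw
  have hlt := fst_mul_lt_of_mem_lrcExponents hr hrN hp
  have hlt' := fst_mul_lt_of_mem_lrcExponents hr hrN hp'
  rw [poleOrder_apply, poleOrder_apply] at hw
  have hmod : p.1 * N = p'.1 * N := by
    simpa [Nat.add_mul_mod_self_right, Nat.mod_eq_of_lt hlt, Nat.mod_eq_of_lt hlt'] using
      congrArg (· % M) hw
  refine Prod.ext (Nat.eq_of_mul_eq_mul_right hN hmod) (Nat.eq_of_mul_eq_mul_right hM ?_)
  omega

theorem singletonOptimal_mul {m M r t : ℕ} (hr : 0 < r) (hrM : r ≤ M + 1) (htm : t ≤ m) :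
    SingletonOptimal (m * M) (t * r + 1) ((m - t) * M) r (M + 1 - r) := by
  have hceil : (t * r + 1 + r - 1) / r = t + 1 := by
    rw [show t * r + 1 + r - 1 = (t + 1) * r by rw [add_mul]; omega, Nat.mul_div_cancel _ hr]
  rw [SingletonOptimal, hceil]
  push_cast [Nat.cast_sub hrM, Nat.cast_sub htm]
  ring

theorem existsOptimalLRC_of_curve {F : Type*} [Field F] [DecidableEq F] {m M N r t : ℕ} {L : F[X]}
    (hL : L.Monic) (hdeg : L.natDegree = N) (hcop : M.Coprime N) (hN : 0 < N)
    {x y : Fin (m * M) → F} (hinj : Function.Injective fun i ↦ (x i, y i))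
    (hxy : ∀ i, x i ^ M = L.eval (y i)) (hfib : ∀ i, #{j | y j = y i} = M)
    (hr : 0 < r) (hrN : (r - 1) * N < M) (htm : t < m) :
    ExistsOptimalLRC F (m * M) (t * r + 1) ((m - t) * M) r (M + 1 - r) := by
  have hM : 0 < M := Nat.zero_lt_of_lt hrN
  have hrM : r ≤ M + 1 := by
    have := Nat.le_mul_of_pos_right (r - 1) hN
    omega
  have hI := injOn_poleOrder_lrcExponents (t := t) hr hN hrN
  have hW (p) (hp : p ∈ lrcExponents r t) := poleOrder_le_of_mem_lrcExponents hr hrN hp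
  have hfst (p) (hp : p ∈ lrcExponents r t) := fst_lt_of_mem_lrcExponents hr hp
  obtain ⟨c, hc, hcw⟩ := exists_mem_evalCode_hammingWt_eq (x := x) hM hfib htm.le
    fun j hj ↦ zero_mk_mem_lrcExponents hr hj
  refine ⟨evalCode (lrcExponents r t) x y, ?_, ⟨?_, c, hc, ?_, hcw⟩, isLRC_evalCode hinj hfib hfst,
    singletonOptimal_mul hr hrM htm.le⟩
  · rw [finrank_evalCode hM hcop hL hdeg hinj hxy hI hW, card_lrcExponents]
    simpa using Nat.mul_lt_mul_of_pos_right htm hM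
  · rw [Nat.sub_mul]
    exact minDistGe_evalCode hM hcop hL hdeg hinj hxy hI hW
  · rintro rfl
    have hpos : 0 < (m - t) * M := Nat.mul_pos (Nat.sub_pos_of_lt htm) hM
    simp [hammingWt, ← hcw] at hpos

theorem existsOptimalLRC_of_tracePoly {F : Type*} [Field F] [Fintype F] [DecidableEq F]
    {P e M K m r t : ℕ} (hF : Fintype.card F = P ^ (e + 1)) (hMK : M * K = P ^ (e + 1) - 1)
    (hm : m ≤ K.gcd (P - 1) * P ^ e) (hr : 0 < r) (hrM : (r - 1) * P ^ e < M) (htm : t < m) :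
    ExistsOptimalLRC F (m * M) (t * r + 1) ((m - t) * M) r (M + 1 - r) := by
  have hP : 1 < P := (Nat.one_lt_pow_iff e.succ_ne_zero).1 (hF ▸ Fintype.one_lt_card)
  have hcop : M.Coprime (P ^ e) := by
    refine Nat.Coprime.coprime_dvd_left (Dvd.intro K hMK) ?_
    refine Nat.Coprime.coprime_dvd_right (pow_dvd_pow P e.le_succ) ?_
    exact (Nat.coprime_self_sub_left (Nat.one_le_pow _ _ hP.le)).2 (Nat.coprime_one_left _)
  have hroots := card_filter_eval_tracePoly_pow_eq_one hF (Nat.gcd_dvd_right K (P - 1))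
  obtain ⟨Y, hY, rfl⟩ := exists_subset_card_eq (hm.trans_eq hroots.symm)
  let points : Finset (F × F) := {z | z.2 ∈ Y ∧ z.1 ^ M = (tracePoly F P e).eval z.2}
  have hfib : ∀ v ∈ Y, #{z ∈ points | z.2 = v} = M := by
    intro v hv
    obtain ⟨k, hk⟩ := Nat.gcd_dvd_left K (P - 1)
    have hvK : (tracePoly F P e).eval v ^ K = 1 := by
      rw [hk, pow_mul, (mem_filter.1 (hY hv)).2, one_pow]
    rw [card_filter_snd_eq]
    simpa [points, hv] using card_filter_pow_eq_of_pow_eq_one (hF ▸ hMK) hvK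
  obtain ⟨z, hinj, hmem, hzfib⟩ :=
    exists_enumeration_of_card_fiber (fun z hz ↦ (mem_filter.1 hz).2.1) hfib
  exact existsOptimalLRC_of_curve (monic_tracePoly F hP e) (natDegree_tracePoly F hP e) hcop
    (by positivity) hinj (fun i ↦ (mem_filter.1 (hmem i)).2.2) hzfib hr hrM htm

end OptimalCodes

theorem le_mul_of_cast_le_div {g q b d P M N m : ℕ} (hM : M * (b * d) + 1 = q) (hN : N * P = q)
    (hm : (m : ℚ) ≤ g * (q - 1) * q / (b * P * M)) : m ≤ g * d * N := by
  have hq : (q : ℚ) - 1 = M * (b * d) := by simp [← hM]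
  suffices (m : ℚ) ≤ g * d * N by exact_mod_cast this
  calc (m : ℚ) ≤ g * (q - 1) * q / (b * P * M) := hm
    _ = g * d * N * (b * P * M / (b * P * M)) := by
        rw [hq, ← hN]
        push_cast
        ring
    _ ≤ g * d * N := mul_le_of_le_one_right (by positivity) (div_self_le_one _)

/-- For `c = s` the curve is `x ^ M = y`, and these are the Tamo–Barg codes whose repair groups are
the cosets of the group of `M`-th roots of unity. -/
theorem stmt_12_general (Q s q : ℕ) (hq : q = Q ^ s) (b : ℕ) (hbdvd : b ∣ (Q ^ s - 1) / (Q - 1))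
    (c : ℕ) (hcdvd : c ∣ s) (M N : ℕ) (hM : M = (Q ^ s - 1) / (b * (Q - 1)))
    (hN : N = Q ^ (s - c)) (b' : ℕ) (hb' : b' ≤ (M - 1) / N)
    (r δ : ℕ) (hr : r = (M - 1) / N + 1 - b') (hδ : δ = M + 1 - r) (t m : ℕ) (htm : t < m)
    (hm : (m : ℚ) ≤ (Nat.gcd b ((Q ^ c - 1) / (Q - 1)) : ℚ) * ((q : ℚ) - 1) * (q : ℚ)
        / ((b : ℚ) * (Q : ℚ) ^ c * (M : ℚ)))
    (F : Type*) [Field F] [Fintype F] [DecidableEq F] (hF : Fintype.card F = q) :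
    ExistsOptimalLRC F (m * M) (t * r + 1) ((m - t) * M) r δ := by
  have hq1 : 1 < Q ^ s := hq ▸ hF ▸ Fintype.one_lt_card
  have hMK : M * (b * (Q - 1)) = Q ^ s - 1 := by
    rw [hM, Nat.div_mul_cancel]
    conv_rhs => rw [← Nat.div_mul_cancel (Nat.sub_one_dvd_pow_sub_one Q s)]
    exact Nat.mul_dvd_mul_right hbdvd _
  obtain ⟨k, rfl⟩ := hcdvd
  obtain ⟨e, rfl⟩ : ∃ e, k = e + 1 := Nat.exists_eq_succ_of_ne_zero (by rintro rfl; simp at hq1)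
  have hNP : N = (Q ^ c) ^ e := by rw [hN, ← pow_mul, mul_add_one, Nat.add_sub_cancel]
  have hgcd : (b * (Q - 1)).gcd (Q ^ c - 1) = b.gcd ((Q ^ c - 1) / (Q - 1)) * (Q - 1) := by
    rw [← Nat.gcd_mul_right, Nat.div_mul_cancel (Nat.sub_one_dvd_pow_sub_one Q c)]
  have hm' : m ≤ (b * (Q - 1)).gcd (Q ^ c - 1) * (Q ^ c) ^ e := by
    have hMq : M * (b * (Q - 1)) + 1 = q := by omega
    have hNq : N * Q ^ c = q := by rw [hNP, hq, pow_mul, pow_succ]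
    rw [hgcd, ← hNP]
    exact le_mul_of_cast_le_div hMq hNq (by exact_mod_cast hm)
  have hrN : (r - 1) * (Q ^ c) ^ e < M := by
    have hMpos : 0 < M := Nat.pos_of_mul_pos_right (b := b * (Q - 1)) (by omega)
    calc (r - 1) * (Q ^ c) ^ e ≤ (M - 1) / N * N := by
          rw [← hNP]; exact Nat.mul_le_mul_right N (by omega)
      _ ≤ M - 1 := Nat.div_mul_le_self _ _
      _ < M := by omega
  rw [hδ]
  exact existsOptimalLRC_of_tracePoly (by rw [hF, hq, pow_mul]) (by rw [hMK, pow_mul]) hm'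
    (by omega) hrN htm

/-- Let `q = Q^s` (`Q` a prime power, `s ≥ 2`), `b` a proper
positive divisor of `(Q^s-1)/(Q-1)`, `c` a proper positive divisor of `s`,
`M = (Q^s-1)/(b(Q-1))`, `N = Q^(s-c)` with `M > N`. For `0 ≤ b' ≤ ⌊(M-1)/N⌋ - 1`,
`r = ⌊(M-1)/N⌋ + 1 - b'`, `δ = M + 1 - r`, and all
`1 ≤ t < m ≤ gcd(b, (Q^c-1)/(Q-1))·(q-1)q/(bQ^cM)`, there exists an optimal
`(r, δ)`-LRC with parameters `[mM, tr+1, (m-t)M]_q`. -/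
theorem stmt_12 (Q : ℕ) (hQ : IsPrimePow Q) (s : ℕ) (hs : 2 ≤ s)
    (q : ℕ) (hq : q = Q ^ s)
    (b : ℕ) (hb : 0 < b) (hbdvd : b ∣ (Q ^ s - 1) / (Q - 1))
    (hblt : b < (Q ^ s - 1) / (Q - 1))
    (c : ℕ) (hc : 0 < c) (hcdvd : c ∣ s) (hclt : c < s)
    (M N : ℕ) (hM : M = (Q ^ s - 1) / (b * (Q - 1))) (hN : N = Q ^ (s - c))
    (hMN : M > N)
    (b' : ℕ) (hb' : b' ≤ (M - 1) / N - 1)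
    (r δ : ℕ) (hr : r = (M - 1) / N + 1 - b') (hδ : δ = M + 1 - r)
    (t m : ℕ) (ht : 1 ≤ t) (htm : t < m)
    (hm : (m : ℚ) ≤ (Nat.gcd b ((Q ^ c - 1) / (Q - 1)) : ℚ) * ((q : ℚ) - 1) * (q : ℚ)
        / ((b : ℚ) * (Q : ℚ) ^ c * (M : ℚ)))
    (F : Type*) [Field F] [Fintype F] [DecidableEq F] (hF : Fintype.card F = q) :
    ExistsOptimalLRC F (m * M) (t * r + 1) ((m - t) * M) r δ := by
  exact stmt_12_general Q s q hq b hbdvd c hcdvd M N hM hN b' (hb'.trans (Nat.sub_le _ _)) r δ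
    hr hδ t m htm hm F hF
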